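/- Let $P$ be a finite nonempty subset of $\mathbb{R}^d$, let $k \ge 1$ be an integer, let $\varepsilon > 0$, and let $f : P \to P$ be a map satisfying $\operatorname{dist}(p, f(p)) \le \varepsilon \cdot \mathrm{Opt}^c_k(P)$ for every $p \in P$, where $\mathrm{Opt}^c_k(P)$ is the optimal $k$-center cost of $P$. Then $S = f(P)$ is a $(k,\varepsilon)$-coreset of $P$ for the $k$-center cost: for every finite nonempty set $C \subseteq \mathbb{R}^d$ with $|C| \le k$, $(1-\varepsilon)\Phi_c(P,C) \le \Phi_c(S,C) \le (1+\varepsilon)\Phi_c(P,C)$. -/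

import Mathlib

open scoped BigOperators Classical

noncomputable def minDist {d : ℕ} (x : EuclideanSpace ℝ (Fin d))
    (C : Finset (EuclideanSpace ℝ (Fin d))) : ℝ :=
  sInf ((fun c => dist x c) '' (C : Set (EuclideanSpace ℝ (Fin d))))

/-- The `k`-center cost `Φ_c(P, C) = max_{p ∈ P} min_{c ∈ C} dist p c`. -/
noncomputable def PhiC {d : ℕ} (P C : Finset (EuclideanSpace ℝ (Fin d))) : ℝ :=
  sSup ((fun p => minDist p C) '' (P : Set (EuclideanSpace ℝ (Fin d))))

/-- The optimal `k`-center cost of `P`. -/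
noncomputable def OptC {d : ℕ} (k : ℕ) (P : Finset (EuclideanSpace ℝ (Fin d))) : ℝ :=
  sInf {x : ℝ | ∃ C : Finset (EuclideanSpace ℝ (Fin d)),
    C.Nonempty ∧ C.card ≤ k ∧ x = PhiC P C}

theorem minDist_nonneg' {d : ℕ} (x : EuclideanSpace ℝ (Fin d))
    (C : Finset (EuclideanSpace ℝ (Fin d))) : 0 ≤ minDist x C := by
  apply Real.sInf_nonneg
  rintro _ ⟨c, _, rfl⟩
  exact dist_nonneg

theorem minDist_tri {d : ℕ} (x y : EuclideanSpace ℝ (Fin d))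
    (C : Finset (EuclideanSpace ℝ (Fin d))) (hC : C.Nonempty) :
    minDist x C ≤ dist x y + minDist y C := by
  have h : minDist x C - dist x y ≤ minDist y C := by
    apply le_csInf
    · exact (Finset.coe_nonempty.mpr hC).image _
    · rintro _ ⟨c, hc, rfl⟩
      have h1 : minDist x C ≤ dist x c :=
        csInf_le ((C.finite_toSet.image _).bddBelow) ⟨c, hc, rfl⟩
      have := dist_triangle x y c
      simp only
      linarith
  linarith

theorem le_PhiC {d : ℕ} (P C : Finset (EuclideanSpace ℝ (Fin d)))
    (p : EuclideanSpace ℝ (Fin d)) (hp : p ∈ P) : minDist p C ≤ PhiC P C :=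
  le_csSup ((P.finite_toSet.image _).bddAbove) ⟨p, hp, rfl⟩

theorem PhiC_le {d : ℕ} (P C : Finset (EuclideanSpace ℝ (Fin d))) (hP : P.Nonempty) (b : ℝ)
    (h : ∀ p ∈ P, minDist p C ≤ b) : PhiC P C ≤ b := by
  apply csSup_le ((Finset.coe_nonempty.mpr hP).image _)
  rintro _ ⟨c, hc, rfl⟩
  exact h c hc

theorem PhiC_nonneg {d : ℕ} (P C : Finset (EuclideanSpace ℝ (Fin d))) : 0 ≤ PhiC P C := by
  apply Real.sSup_nonneg
  rintro _ ⟨c, _, rfl⟩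
  exact minDist_nonneg' _ _

theorem stmt5 (d k : ℕ) (hd : 1 ≤ d) (hk : 1 ≤ k) (ε : ℝ) (hε : 0 < ε)
    (P : Finset (EuclideanSpace ℝ (Fin d))) (hP : P.Nonempty)
    (f : EuclideanSpace ℝ (Fin d) → EuclideanSpace ℝ (Fin d))
    (hf : ∀ p ∈ P, f p ∈ P)
    (hdist : ∀ p ∈ P, dist p (f p) ≤ ε * OptC k P) :
    ∀ C : Finset (EuclideanSpace ℝ (Fin d)), C.Nonempty → C.card ≤ k →
      (1 - ε) * PhiC P C ≤ PhiC (P.image f) C ∧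
        PhiC (P.image f) C ≤ (1 + ε) * PhiC P C := by
  intro C hC hk'
  have hO : OptC k P ≤ PhiC P C := by
    apply csInf_le
    · refine ⟨0, ?_⟩
      rintro _ ⟨D, _, _, rfl⟩
      exact PhiC_nonneg _ _
    · exact ⟨C, hC, hk', rfl⟩
  have h0 := PhiC_nonneg P C
  have hεO := mul_le_mul_of_nonneg_left hO hε.le
  constructor
  · have : PhiC P C ≤ ε * PhiC P C + PhiC (P.image f) C := by
      apply PhiC_le _ _ hP
      intro p hp
      have h1 := minDist_tri p (f p) C hC
      have h2 := le_PhiC (P.image f) C (f p) (Finset.mem_image_of_mem f hp)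
      have h3 := hdist p hp
      linarith
    linarith
  · have : PhiC (P.image f) C ≤ PhiC P C := by
      apply PhiC_le _ _ (hP.image f)
      intro q hq
      obtain ⟨p, hp, rfl⟩ := Finset.mem_image.mp hq
      exact le_PhiC P C _ (hf p hp)
    have := mul_nonneg hε.le h0
    linarith
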